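/- arXiv:2502.16264 — 2 statements merged into one kernel-verified Lean document; each statement's English description precedes it below -/
import Mathlib

section
/- Let d ≥ 2 be an integer and fix an integer ℓ ≥ 0. Then the linear span of the family {R_{ℓ,k} : k ∈ ℕ} of radial Zernike polynomials is dense in the weighted Lebesgue space L²([0,1], r^{d−1} dr) (the space of complex-valued measurable functions g on [0,1] with ∫₀¹ |g(r)|² r^{d−1} dr < ∞); consequently {R_{ℓ,k}}_{k∈ℕ} is an orthonormal basis of this space. -/
open Finset MeasureTheory

/-- The radial Zernike polynomial `R_{ℓ,k}` in dimension `d`. -/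
noncomputable def zernikeR (d ℓ k : ℕ) (r : ℝ) : ℝ :=
  Real.sqrt (2 * ℓ + 4 * k + d) *
    ∑ s ∈ Finset.range (k + 1),
      (-1 : ℝ) ^ s * (k.choose s : ℝ) * ((k.factorial : ℝ))⁻¹ *
        (∏ j ∈ Finset.Icc 1 k, ((ℓ : ℝ) + 2 * k - s - j + d / 2)) *
        r ^ (ℓ + 2 * (k - s))

/-!
With `a = ℓ + d / 2`, the function `R_{ℓ,k}` is, up to a constant, `r ^ ℓ J_k(r ^ 2)`, where the
`m`-th coefficient of `J_k` is `(-1) ^ (k - m) (k choose m) / k!` times the value at `a + m` of the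
rising factorial `x (x + 1) ⋯ (x + k - 1)`. Integrating term by term, the `j`-th moment of `J_k` for
`t ^ (a - 1) dt` is the barycentric form of the Lagrange interpolation of this rising factorial at
the nodes `a, …, a + k`, evaluated at `x = -j`. The rising factorial vanishes there for `j < k`,
which is orthogonality, and its value for `j = k` gives the norm.

Since `J_k` has degree `k`, the linear combinations of the `R_{ℓ,k}` are exactly the functions
`r ^ ℓ q(r ^ 2)` with `q` a polynomial. Division by `r ^ ℓ` is an isometry from `L²(r ^ (d - 1) dr)`
onto `L²(r ^ (2 ℓ + d - 1) dr)`, and there even polynomials are dense: continuous functions are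
dense, and a continuous `f` is uniformly approximated by applying Weierstrass' theorem to
`t ↦ f (√t)`.
-/

open Polynomial
open scoped ENNReal Nat

section EquallySpacedNodes

variable {K : Type*} [Field K] [CharZero K]

theorem nodalWeight_range_add_natCast (a : K) {k m : ℕ} (hm : m ≤ k) :
    Lagrange.nodalWeight (range (k + 1)) (fun j : ℕ => a + j) m
      = (-1) ^ (k - m) * k.choose m / k ! := by
  induction k, hm using Nat.le_induction with
  | base =>
    have h : ∏ j ∈ range m, ((m : K) - j) = m ! := by
      rw [← descPochhammer_eval_eq_prod_range, descPochhammer_eval_eq_descFactorial,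
        Nat.descFactorial_self]
    simp [Lagrange.nodalWeight, range_add_one, h]
  | succ k hm ih =>
    have hchoose : ((k + 1 - m : ℕ) : K) * (k + 1).choose m = (k + 1) * k.choose m := by
      have := Nat.choose_mul_succ_eq k m
      rw [mul_comm, mul_comm (k + 1 : K)]
      exact_mod_cast this.symm
    have hne : ((k + 1 - m : ℕ) : K) ≠ 0 := by
      rw [Nat.cast_ne_zero]; omega
    have hsub : (a + m) - (a + (k + 1 : ℕ)) = -((k + 1 - m : ℕ) : K) := by
      rw [Nat.cast_sub (by omega)]; ring
    rw [Lagrange.nodalWeight] at ih ⊢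
    rw [range_add_one, erase_insert_of_ne (by omega), prod_insert (by simp), ih, hsub,
      Nat.succ_sub hm, pow_succ, Nat.factorial_succ]
    rw [Nat.succ_sub hm] at hchoose hne
    push_cast at hchoose hne ⊢
    have hfact : (k ! : K) ≠ 0 := Nat.cast_ne_zero.2 k.factorial_ne_zero
    have hsucc : (k + 1 : K) ≠ 0 := Nat.cast_add_one_ne_zero k
    field_simp
    linear_combination hchoose

theorem sum_alternating_choose_mul_eval_div {P : K[X]} {k : ℕ} (hP : P.degree < (k + 1 : ℕ))
    {a y : K} (hy : ∀ m ∈ range (k + 1), y ≠ a + m) :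
    ∑ m ∈ range (k + 1), (-1) ^ (k - m) * (k.choose m : K) * P.eval (a + m) / (y - (a + m))
      = k ! * P.eval y / ∏ m ∈ range (k + 1), (y - (a + m)) := by
  have hinj : Set.InjOn (fun m : ℕ => a + m) (range (k + 1)) := fun i _ j _ h => by simpa using h
  have hfact : (k ! : K) ≠ 0 := Nat.cast_ne_zero.2 k.factorial_ne_zero
  have hnodal : ∏ m ∈ range (k + 1), (y - (a + m)) ≠ 0 :=
    prod_ne_zero_iff.2 fun m hm => sub_ne_zero.2 (hy m hm)
  have hbary := Lagrange.eval_interpolate_not_at_node (fun m : ℕ => P.eval (a + m)) hy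
  rw [← Lagrange.eq_interpolate hinj (by simpa using hP), Lagrange.eval_nodal] at hbary
  rw [hbary, mul_left_comm, mul_div_cancel_left₀ _ hnodal, mul_sum]
  refine sum_congr rfl fun m hm => ?_
  rw [nodalWeight_range_add_natCast a (Nat.lt_succ_iff.1 (mem_range.1 hm))]
  field_simp

end EquallySpacedNodes

/-- The Jacobi polynomial `P_k^{(0, a - 1)}(2 t - 1)`, orthogonal on `[0, 1]` for `t ^ (a - 1) dt`.
It is written in the monomial basis, with `(a + m) (a + m + 1) ⋯ (a + m + k - 1)` encoded as a value
of `ascPochhammer`. The radial Zernike polynomials are `r ^ ℓ` times its value at `r ^ 2`, for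
`a = ℓ + d / 2`. -/
noncomputable def shiftedJacobi (a : ℝ) (k : ℕ) : ℝ[X] :=
  ∑ m ∈ range (k + 1),
    monomial m ((-1) ^ (k - m) * k.choose m * (ascPochhammer ℝ k).eval (a + m) / k !)

section ShiftedJacobi

variable {a : ℝ}

theorem coeff_shiftedJacobi (a : ℝ) (k m : ℕ) :
    (shiftedJacobi a k).coeff m
      = (-1) ^ (k - m) * k.choose m * (ascPochhammer ℝ k).eval (a + m) / k ! := by
  simp only [shiftedJacobi, finsetSum_coeff, coeff_monomial, sum_ite_eq', mem_range]
  refine ite_eq_left_iff.2 fun hm => ?_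
  simp [Nat.choose_eq_zero_of_lt (show k < m by omega)]

theorem coeff_shiftedJacobi_self (a : ℝ) (k : ℕ) :
    (shiftedJacobi a k).coeff k = (ascPochhammer ℝ k).eval (a + k) / k ! := by
  simp [coeff_shiftedJacobi]

theorem degree_shiftedJacobi (ha : 0 < a) (k : ℕ) : (shiftedJacobi a k).degree = k := by
  refine degree_eq_of_le_of_coeff_ne_zero ?_ ?_
  · refine (degree_le_iff_coeff_zero _ _).2 fun m hm => ?_
    rw [coeff_shiftedJacobi, Nat.choose_eq_zero_of_lt (by exact_mod_cast hm)]
    simp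
  · have := ascPochhammer_pos k (a + k) (by positivity)
    rw [coeff_shiftedJacobi_self]
    positivity

theorem natDegree_shiftedJacobi (ha : 0 < a) (k : ℕ) : (shiftedJacobi a k).natDegree = k :=
  natDegree_eq_of_degree_eq_some (degree_shiftedJacobi ha k)

theorem span_range_shiftedJacobi_map {K : Type*} [Field K] [Algebra ℝ K] (ha : 0 < a) :
    Submodule.span K (Set.range fun k => (shiftedJacobi a k).map (algebraMap ℝ K)) = ⊤ :=
  let S : Polynomial.Sequence K :=
    ⟨fun k => (shiftedJacobi a k).map (algebraMap ℝ K),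
      fun k => (degree_map _ _).trans (degree_shiftedJacobi ha k)⟩
  S.span fun k => (leadingCoeff_ne_zero.2 (S.ne_zero k)).isUnit

theorem sum_coeff_shiftedJacobi_div (ha : 0 < a) (k j : ℕ) :
    ∑ m ∈ range (k + 1), (shiftedJacobi a k).coeff m / (a + j + m)
      = (-1) ^ k * (ascPochhammer ℝ k).eval (-j : ℝ) / (ascPochhammer ℝ (k + 1)).eval (a + j) := by
  have hpole : ∀ m ∈ range (k + 1), (-j : ℝ) ≠ a + m := fun m _ => by
    have : (0 : ℝ) < a + m + j := by positivity
    linarith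
  have hdegree : (ascPochhammer ℝ k).degree < (k + 1 : ℕ) := by
    rw [degree_eq_natDegree (monic_ascPochhammer ℝ k).ne_zero, ascPochhammer_natDegree]
    exact_mod_cast k.lt_succ_self
  have hprod : ∏ m ∈ range (k + 1), ((-j : ℝ) - (a + m))
      = (-1) ^ (k + 1) * (ascPochhammer ℝ (k + 1)).eval (a + j) := by
    rw [← neg_neg (a + j), ascPochhammer_eval_neg_eq_descPochhammer,
      descPochhammer_eval_eq_prod_range, ← mul_assoc, ← mul_pow]
    simp only [mul_neg, mul_one, neg_neg, one_pow, one_mul]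
    exact prod_congr rfl fun m _ => by ring
  have hinterp := sum_alternating_choose_mul_eval_div hdegree hpole
  calc ∑ m ∈ range (k + 1), (shiftedJacobi a k).coeff m / (a + j + m)
      = -(k ! : ℝ)⁻¹ * ∑ m ∈ range (k + 1), (-1) ^ (k - m) * (k.choose m : ℝ) *
          (ascPochhammer ℝ k).eval (a + m) / (-j - (a + m)) := by
        rw [mul_sum]
        refine sum_congr rfl fun m _ => ?_
        rw [coeff_shiftedJacobi, show (-j : ℝ) - (a + m) = -(a + j + m) by ring]
        field_simp
    _ = _ := by
        rw [hinterp, hprod, pow_succ]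
        have : (k ! : ℝ) ≠ 0 := by positivity
        have := (ascPochhammer_pos (k + 1) (a + j) (by positivity)).ne'
        field_simp
        simp [← pow_mul, mul_comm k]

theorem integral_eval_sq_mul_pow {p : ℝ[X]} {N : ℕ} (hp : p.natDegree < N) (n : ℕ) :
    ∫ r in (0 : ℝ)..1, p.eval (r ^ 2) * r ^ n
      = ∑ m ∈ range N, p.coeff m / (2 * m + n + 1) := by
  simp_rw [eval_eq_sum_range' hp, sum_mul, mul_assoc, ← pow_mul, ← pow_add]
  rw [intervalIntegral.integral_finsetSum fun m _ =>
    Continuous.intervalIntegrable (by fun_prop) _ _]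
  refine sum_congr rfl fun m _ => ?_
  rw [intervalIntegral.integral_const_mul, integral_pow]
  simp [div_eq_mul_inv]

theorem integral_shiftedJacobi_mul_pow {n : ℕ} (ha : 2 * a = n + 1) (k j : ℕ) :
    ∫ r in (0 : ℝ)..1, (shiftedJacobi a k).eval (r ^ 2) * r ^ (2 * j + n)
      = (-1) ^ k * (ascPochhammer ℝ k).eval (-j : ℝ)
          / (2 * (ascPochhammer ℝ (k + 1)).eval (a + j)) := by
  have hpos : 0 < a := by linarith [n.cast_nonneg (α := ℝ)]
  have hdenom (m : ℕ) : 2 * m + ((2 * j + n : ℕ) : ℝ) + 1 = 2 * (a + j + m) := by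
    push_cast
    linarith
  rw [integral_eval_sq_mul_pow (N := k + 1) (by rw [natDegree_shiftedJacobi hpos]; omega)]
  simp_rw [hdenom, mul_comm (2 : ℝ), ← div_div]
  rw [← sum_div, sum_coeff_shiftedJacobi_div hpos]

theorem integral_shiftedJacobi_mul_eval {n : ℕ} (ha : 2 * a = n + 1) {k : ℕ} {q : ℝ[X]}
    (hq : q.natDegree ≤ k) :
    ∫ r in (0 : ℝ)..1, (shiftedJacobi a k).eval (r ^ 2) * q.eval (r ^ 2) * r ^ n
      = q.coeff k * (k ! / (2 * (ascPochhammer ℝ (k + 1)).eval (a + k))) := by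
  have hexpand (r : ℝ) : (shiftedJacobi a k).eval (r ^ 2) * q.eval (r ^ 2) * r ^ n
      = ∑ j ∈ range (k + 1),
          q.coeff j * ((shiftedJacobi a k).eval (r ^ 2) * r ^ (2 * j + n)) := by
    rw [eval_eq_sum_range' (Nat.lt_succ_of_le hq) (r ^ 2), mul_sum, sum_mul]
    exact sum_congr rfl fun j _ => by ring
  have hvanish (j : ℕ) (hj : j ∈ range k) : (ascPochhammer ℝ k).eval (-j : ℝ) = 0 :=
    ascPochhammer_eval_neg_coe_nat_of_lt (mem_range.1 hj)
  have hfactorial : (-1) ^ k * (ascPochhammer ℝ k).eval (-k : ℝ) = k ! := by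
    rw [ascPochhammer_eval_neg_eq_descPochhammer, descPochhammer_eval_eq_descFactorial,
      Nat.descFactorial_self, ← mul_assoc, ← mul_pow]
    simp
  simp_rw [hexpand]
  rw [intervalIntegral.integral_finsetSum fun j _ =>
    Continuous.intervalIntegrable (by fun_prop) _ _]
  simp_rw [intervalIntegral.integral_const_mul, integral_shiftedJacobi_mul_pow ha]
  rw [sum_range_succ, sum_eq_zero fun j hj => by rw [hvanish j hj]; simp, zero_add, hfactorial]

theorem integral_shiftedJacobi_mul_shiftedJacobi {n : ℕ} (ha : 2 * a = n + 1) (j k : ℕ) :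
    ∫ r in (0 : ℝ)..1, (shiftedJacobi a j).eval (r ^ 2) * (shiftedJacobi a k).eval (r ^ 2) * r ^ n
      = if j = k then (2 * (a + 2 * k))⁻¹ else 0 := by
  have hpos : 0 < a := by linarith [n.cast_nonneg (α := ℝ)]
  wlog hkj : k ≤ j generalizing j k
  · simp_rw [mul_comm (eval _ (shiftedJacobi a j)), this k j (by omega)]
    grind
  rw [integral_shiftedJacobi_mul_eval ha (by rwa [natDegree_shiftedJacobi hpos])]
  split_ifs with h
  · have := ascPochhammer_pos j (a + j) (by positivity)
    rw [← h, coeff_shiftedJacobi_self, ascPochhammer_succ_eval, add_assoc a, ← two_mul]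
    field_simp
  · rw [coeff_eq_zero_of_natDegree_lt (by rw [natDegree_shiftedJacobi hpos]; omega), zero_mul]

end ShiftedJacobi

section Approximation

variable {𝕜 : Type*} [RCLike 𝕜]

theorem exists_rclike_polynomial_near_of_continuousOn {a b : ℝ} {f : ℝ → 𝕜}
    (hf : ContinuousOn f (Set.Icc a b)) {ε : ℝ} (hε : 0 < ε) :
    ∃ p : 𝕜[X], ∀ x ∈ Set.Icc a b, ‖f x - p.eval (x : 𝕜)‖ < ε := by
  obtain ⟨p, hp⟩ := exists_polynomial_near_of_continuousOn a b (fun x => RCLike.re (f x))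
    (RCLike.continuous_re.comp_continuousOn hf) (ε / 2) (half_pos hε)
  obtain ⟨q, hq⟩ := exists_polynomial_near_of_continuousOn a b (fun x => RCLike.im (f x))
    (RCLike.continuous_im.comp_continuousOn hf) (ε / 2) (half_pos hε)
  refine ⟨p.map (algebraMap ℝ 𝕜) + C RCLike.I * q.map (algebraMap ℝ 𝕜), fun x hx => ?_⟩
  have heval (s : ℝ[X]) : (s.map (algebraMap ℝ 𝕜)).eval (x : 𝕜) = (s.eval x : ℝ) :=
    eval_map_apply (algebraMap ℝ 𝕜) x
  have hI : ‖(RCLike.I : 𝕜)‖ ≤ 1 := by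
    rw [RCLike.norm_I]
    split_ifs <;> norm_num
  calc ‖f x - (p.map (algebraMap ℝ 𝕜) + C RCLike.I * q.map (algebraMap ℝ 𝕜)).eval (x : 𝕜)‖
      = ‖((RCLike.re (f x) - p.eval x : ℝ) : 𝕜)
          + ((RCLike.im (f x) - q.eval x : ℝ) : 𝕜) * RCLike.I‖ := by
        rw [eval_add, eval_C_mul, heval, heval]
        nth_rw 1 [← RCLike.re_add_im (f x)]
        push_cast
        ring_nf
    _ ≤ |RCLike.re (f x) - p.eval x| + |RCLike.im (f x) - q.eval x| := by
        refine (norm_add_le _ _).trans (add_le_add (RCLike.norm_ofReal _).le ?_)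
        rw [norm_mul, RCLike.norm_ofReal]
        exact mul_le_of_le_one_right (abs_nonneg _) hI
    _ < ε / 2 + ε / 2 := by
        rw [abs_sub_comm, abs_sub_comm (RCLike.im (f x))]
        exact add_lt_add (hp x hx) (hq x hx)
    _ = ε := add_halves ε

theorem exists_even_polynomial_near_of_continuous {f : ℝ → 𝕜} (hf : Continuous f) (b : ℝ)
    {ε : ℝ} (hε : 0 < ε) :
    ∃ q : 𝕜[X], ∀ r ∈ Set.Icc 0 b, ‖f r - q.eval ((r : 𝕜) ^ 2)‖ < ε := by
  obtain ⟨q, hq⟩ := exists_rclike_polynomial_near_of_continuousOn (a := 0) (b := b ^ 2)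
    (f := fun t => f √t) (by fun_prop) hε
  refine ⟨q, fun r hr => ?_⟩
  simpa [Real.sqrt_sq hr.1] using hq (r ^ 2) ⟨sq_nonneg r, pow_le_pow_left₀ hr.1 hr.2 2⟩

theorem exists_even_polynomial_eLpNorm_sub_le {μ : Measure ℝ} [IsFiniteMeasure μ] {b : ℝ}
    (hμ : ∀ᵐ r ∂μ, r ∈ Set.Icc 0 b) {p : ℝ≥0∞} (hp_one : 1 ≤ p) (hp_top : p ≠ ∞) {f : ℝ → 𝕜}
    (hf : MemLp f p μ) {ε : ℝ≥0∞} (hε : ε ≠ 0) :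
    ∃ q : 𝕜[X], eLpNorm (fun r => f r - q.eval ((r : 𝕜) ^ 2)) p μ ≤ ε := by
  obtain ⟨g, hfg, hg⟩ := hf.exists_boundedContinuous_eLpNorm_sub_le hp_top (ENNReal.half_pos hε).ne'
  have hmass : μ Set.univ ^ p.toReal⁻¹ ≠ ∞ :=
    ENNReal.rpow_ne_top_of_nonneg (by positivity) (measure_ne_top μ _)
  obtain ⟨δ, hδ, hδε⟩ := ENNReal.exists_nnreal_pos_mul_lt hmass (ENNReal.half_pos hε).ne'
  obtain ⟨q, hq⟩ := exists_even_polynomial_near_of_continuous g.continuous b (NNReal.coe_pos.2 hδ)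
  have hgq : eLpNorm (fun r => g r - q.eval ((r : 𝕜) ^ 2)) p μ ≤ ε / 2 :=
    calc eLpNorm (fun r => g r - q.eval ((r : 𝕜) ^ 2)) p μ
        ≤ μ Set.univ ^ p.toReal⁻¹ * ENNReal.ofReal δ :=
          eLpNorm_le_of_ae_bound (hμ.mono fun r hr => (hq r hr).le)
      _ ≤ ε / 2 := by
          rw [ENNReal.ofReal_coe_nnreal, mul_comm]
          exact hδε.le
  have hq_meas : AEStronglyMeasurable (fun r : ℝ => q.eval ((r : 𝕜) ^ 2)) μ :=
    (by fun_prop : Continuous fun r : ℝ => q.eval ((r : 𝕜) ^ 2)).aestronglyMeasurable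
  refine ⟨q, ?_⟩
  calc eLpNorm (fun r => f r - q.eval ((r : 𝕜) ^ 2)) p μ
      = eLpNorm ((f - ⇑g) + fun r => g r - q.eval ((r : 𝕜) ^ 2)) p μ := by
        congr 1
        ext r
        simp
    _ ≤ ε / 2 + ε / 2 :=
        (eLpNorm_add_le (hf.1.sub hg.1) (hg.1.sub hq_meas) hp_one).trans (add_le_add hfg hgq)
    _ = ε := ENNReal.add_halves ε

end Approximation

/-- The measure `r ^ n dr` on `[0, 1]`, up to a constant the radial part of Lebesgue measure on the
unit ball of dimension `n + 1`. It is carried by `(0, 1]`, the domain of interval integrals. -/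
noncomputable def radialMeasure (n : ℕ) : Measure ℝ :=
  (volume.restrict (Set.Ioc 0 1)).withDensity fun r => ENNReal.ofReal (r ^ n)

namespace radialMeasure

theorem ae_mem_Ioc (n : ℕ) : ∀ᵐ r ∂radialMeasure n, r ∈ Set.Ioc (0 : ℝ) 1 :=
  (withDensity_absolutelyContinuous _ _).ae_le (ae_restrict_mem measurableSet_Ioc)

instance isFiniteMeasure (n : ℕ) : IsFiniteMeasure (radialMeasure n) :=
  isFiniteMeasure_withDensity_ofReal <| Integrable.hasFiniteIntegral <|
    (continuous_pow n).integrableOn_Ioc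

theorem integral_eq {E : Type*} [NormedAddCommGroup E] [NormedSpace ℝ E] (n : ℕ) (f : ℝ → E) :
    ∫ r, f r ∂radialMeasure n = ∫ r in (0 : ℝ)..1, r ^ n • f r := by
  rw [radialMeasure, intervalIntegral.integral_of_le zero_le_one,
    integral_withDensity_eq_integral_toReal_smul (by fun_prop) (ae_of_all _ fun _ => by simp)]
  refine setIntegral_congr_fun measurableSet_Ioc fun r hr => ?_
  simp only [ENNReal.toReal_ofReal (pow_nonneg hr.1.le n)]

theorem lintegral_eq (n : ℕ) (f : ℝ → ℝ≥0∞) :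
    ∫⁻ r, f r ∂radialMeasure n = ∫⁻ r in Set.Ioc 0 1, ENNReal.ofReal (r ^ n) * f r :=
  lintegral_withDensity_eq_lintegral_mul_non_measurable _ (by fun_prop) (by simp) _

theorem withDensity_pow (m n : ℕ) :
    (radialMeasure n).withDensity (fun r => ENNReal.ofReal (r ^ m)) = radialMeasure (m + n) := by
  rw [radialMeasure, radialMeasure, ← withDensity_mul _ (by fun_prop) (by fun_prop)]
  refine withDensity_congr_ae ?_
  filter_upwards [ae_restrict_mem measurableSet_Ioc] with r hr
  rw [Pi.mul_apply, ← ENNReal.ofReal_mul (pow_nonneg hr.1.le n), pow_add, mul_comm]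

variable {𝕜 : Type*} [RCLike 𝕜]

theorem eLpNorm_pow_mul (l n : ℕ) (f : ℝ → 𝕜) :
    eLpNorm (fun r : ℝ => (r : 𝕜) ^ l * f r) 2 (radialMeasure n)
      = eLpNorm f 2 (radialMeasure (2 * l + n)) := by
  simp only [eLpNorm_eq_lintegral_rpow_enorm_toReal two_ne_zero ENNReal.ofNat_ne_top, lintegral_eq]
  congr 1
  refine setLIntegral_congr_fun measurableSet_Ioc fun r hr => ?_
  have h : ‖(r : 𝕜) ^ l‖ₑ ^ 2 = ENNReal.ofReal (r ^ (2 * l)) := by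
    rw [← ofReal_norm, ← ENNReal.ofReal_pow (norm_nonneg _), norm_pow, RCLike.norm_ofReal,
      abs_of_pos hr.1, ← pow_mul, mul_comm l]
  simp only [ENNReal.toReal_ofNat, ENNReal.rpow_ofNat]
  rw [enorm_mul, mul_pow, h, pow_add, ENNReal.ofReal_mul (pow_nonneg hr.1.le _)]
  ring

theorem memLp_two_iff {f : ℝ → 𝕜} (n : ℕ) (hf : AEStronglyMeasurable f (radialMeasure n)) :
    MemLp f 2 (radialMeasure n)
      ↔ ∫⁻ r in Set.Ioc (0 : ℝ) 1, ENNReal.ofReal (‖f r‖ ^ 2 * r ^ n) < ∞ := by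
  rw [memLp_two_iff_integrable_sq_norm hf, Integrable, and_iff_right (by fun_prop),
    hasFiniteIntegral_iff_ofReal (ae_of_all _ fun _ => by positivity), lintegral_eq]
  simp_rw [ENNReal.ofReal_mul (sq_nonneg ‖f _‖), mul_comm]

theorem integral_sq_norm_eq {f : ℝ → 𝕜} (n : ℕ) (hf : AEStronglyMeasurable f (radialMeasure n)) :
    ∫ r in (0 : ℝ)..1, ‖f r‖ ^ 2 * r ^ n = (eLpNorm f 2 (radialMeasure n)).toReal ^ 2 := by
  have hnonneg : 0 ≤ ∫ r, ‖f r‖ ^ 2 ∂radialMeasure n := integral_nonneg fun r => sq_nonneg ‖f r‖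
  have hroot := Real.rpow_inv_natCast_pow hnonneg two_ne_zero
  rw [toReal_eLpNorm hf, lpNorm_eq_integral_norm_rpow_toReal two_ne_zero ENNReal.ofNat_ne_top hf]
  simp only [ENNReal.toReal_ofNat, Real.rpow_ofNat]
  rw [Nat.cast_ofNat] at hroot
  rw [hroot, integral_eq]
  simp only [smul_eq_mul, mul_comm]

theorem exists_pow_mul_even_polynomial_eLpNorm_sub_le {f : ℝ → 𝕜} {n : ℕ}
    (hf : MemLp f 2 (radialMeasure n)) (l : ℕ) {ε : ℝ≥0∞} (hε : ε ≠ 0) :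
    ∃ q : 𝕜[X],
      eLpNorm (fun r => f r - (r : 𝕜) ^ l * q.eval ((r : 𝕜) ^ 2)) 2 (radialMeasure n) ≤ ε := by
  let h (r : ℝ) : 𝕜 := f r / (r : 𝕜) ^ l
  have hfh : ∀ᵐ r ∂radialMeasure n, f r = (r : 𝕜) ^ l * h r := by
    filter_upwards [ae_mem_Ioc n] with r hr
    rw [mul_div_cancel₀ _ (pow_ne_zero l (RCLike.ofReal_ne_zero.2 hr.1.ne'))]
  have hh : MemLp h 2 (radialMeasure (2 * l + n)) := by
    refine ⟨?_, ?_⟩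
    · have hpow : AEStronglyMeasurable (fun r : ℝ => (r : 𝕜) ^ l) (radialMeasure n) :=
        (by fun_prop : Continuous fun r : ℝ => (r : 𝕜) ^ l).aestronglyMeasurable
      rw [← withDensity_pow]
      exact (hf.1.div₀ hpow).mono_ac (withDensity_absolutelyContinuous _ _)
    · rw [← eLpNorm_pow_mul, ← eLpNorm_congr_ae hfh]
      exact hf.2
  obtain ⟨q, hq⟩ := exists_even_polynomial_eLpNorm_sub_le
    ((ae_mem_Ioc _).mono fun _ hr => Set.Ioc_subset_Icc_self hr) one_le_two ENNReal.ofNat_ne_top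
    hh hε
  refine ⟨q, ?_⟩
  rw [← eLpNorm_pow_mul l n] at hq
  rwa [eLpNorm_congr_ae (hfh.mono fun r hr => by rw [hr, ← mul_sub])]

end radialMeasure

section ZernikeR

theorem prod_Icc_sub_natCast {R : Type*} [CommRing R] (x : R) (k : ℕ) :
    ∏ j ∈ Icc 1 k, (x - j) = (ascPochhammer R k).eval (x - k) := by
  rw [← Ico_add_one_right_eq_Icc, prod_Ico_eq_prod_range, Nat.add_sub_cancel,
    ← sub_add_cancel (x - k) 1, sub_right_comm, ← descPochhammer_eval_eq_ascPochhammer,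
    descPochhammer_eval_eq_prod_range]
  exact prod_congr rfl fun i _ => by push_cast; ring

theorem zernikeR_eq_mul_shiftedJacobi (d ℓ k : ℕ) (r : ℝ) :
    zernikeR d ℓ k r
      = √(2 * ℓ + 4 * k + d) * (r ^ ℓ * (shiftedJacobi (ℓ + d / 2) k).eval (r ^ 2)) := by
  rw [zernikeR, shiftedJacobi, eval_finsetSum]
  congr 1
  rw [mul_sum, ← sum_range_reflect]
  refine sum_congr rfl fun m hm => ?_
  have hmk : m ≤ k := Nat.lt_succ_iff.1 (mem_range.1 hm)
  have hprod : ∏ j ∈ Icc 1 k, ((ℓ : ℝ) + 2 * k - (k - m : ℕ) - j + d / 2)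
      = (ascPochhammer ℝ k).eval (ℓ + d / 2 + m : ℝ) := by
    rw [show (ℓ + d / 2 + m : ℝ) = (ℓ + d / 2 + k + m) - k by ring, ← prod_Icc_sub_natCast]
    refine prod_congr rfl fun j _ => ?_
    rw [Nat.cast_sub hmk]
    ring
  rw [Nat.add_sub_cancel, Nat.sub_sub_self hmk, hprod, eval_monomial, Nat.choose_symm hmk]
  ring

variable {d : ℕ}

theorem integral_zernikeR_mul_zernikeR (hd : 0 < d) (ℓ k k' : ℕ) :
    ∫ r in (0 : ℝ)..1, zernikeR d ℓ k r * zernikeR d ℓ k' r * r ^ (d - 1)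
      = if k = k' then 1 else 0 := by
  have hweight : 2 * ((ℓ : ℝ) + d / 2) = (2 * ℓ + (d - 1) : ℕ) + 1 := by
    push_cast [Nat.cast_sub hd]
    ring
  have hfactor (r : ℝ) : zernikeR d ℓ k r * zernikeR d ℓ k' r * r ^ (d - 1)
      = √(2 * ℓ + 4 * k + d) * √(2 * ℓ + 4 * k' + d)
        * ((shiftedJacobi (ℓ + d / 2) k).eval (r ^ 2) * (shiftedJacobi (ℓ + d / 2) k').eval (r ^ 2)
          * r ^ (2 * ℓ + (d - 1))) := by
    rw [zernikeR_eq_mul_shiftedJacobi, zernikeR_eq_mul_shiftedJacobi]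
    ring
  simp_rw [hfactor]
  rw [intervalIntegral.integral_const_mul, integral_shiftedJacobi_mul_shiftedJacobi hweight]
  split_ifs with h
  · rw [← h, Real.mul_self_sqrt (by positivity)]
    field_simp
    ring
  · rw [mul_zero]

variable {𝕜 : Type*} [RCLike 𝕜]

theorem exists_sum_zernikeR_eq (hd : 0 < d) (ℓ : ℕ) (q : 𝕜[X]) :
    ∃ (N : ℕ) (c : ℕ → 𝕜), ∀ r : ℝ,
      ∑ k ∈ range N, c k * (zernikeR d ℓ k r : 𝕜) = (r : 𝕜) ^ ℓ * q.eval ((r : 𝕜) ^ 2) := by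
  have hpos : (0 : ℝ) < ℓ + d / 2 := by positivity
  have hq : q ∈ Submodule.span 𝕜
      (Set.range fun k => (shiftedJacobi (ℓ + d / 2) k).map (algebraMap ℝ 𝕜)) := by
    rw [span_range_shiftedJacobi_map hpos]
    exact Submodule.mem_top
  obtain ⟨b, rfl⟩ := Finsupp.mem_span_range_iff_exists_finsupp.1 hq
  obtain ⟨N, hN⟩ := b.support.exists_nat_subset_range
  refine ⟨N, fun k => b k / √(2 * ℓ + 4 * k + d), fun r => ?_⟩
  rw [Finsupp.sum_of_support_subset b hN _ (by simp), eval_finsetSum, mul_sum]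
  refine sum_congr rfl fun k _ => ?_
  have hsqrt : (√(2 * ℓ + 4 * k + d) : 𝕜) ≠ 0 := RCLike.ofReal_ne_zero.2 (by positivity)
  have heval : ((shiftedJacobi (ℓ + d / 2) k).map (algebraMap ℝ 𝕜)).eval ((r : 𝕜) ^ 2)
      = ((shiftedJacobi (ℓ + d / 2) k).eval (r ^ 2) : ℝ) := by
    rw [← RCLike.ofReal_pow]
    exact eval_map_apply (algebraMap ℝ 𝕜) (r ^ 2)
  rw [zernikeR_eq_mul_shiftedJacobi, eval_smul, heval, smul_eq_mul]
  push_cast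
  field_simp

theorem exists_integral_sub_sum_zernikeR_lt (hd : 0 < d) (ℓ n : ℕ) {g : ℝ → 𝕜}
    (hg : MemLp g 2 (radialMeasure n)) {ε : ℝ} (hε : 0 < ε) :
    ∃ (N : ℕ) (c : ℕ → 𝕜),
      ∫ r in (0 : ℝ)..1, ‖g r - ∑ k ∈ range N, c k * (zernikeR d ℓ k r : 𝕜)‖ ^ 2 * r ^ n < ε := by
  obtain ⟨δ, hδ, hδε⟩ : ∃ δ > 0, δ ^ 2 < ε :=
    ⟨√(ε / 2), by positivity, by rw [Real.sq_sqrt (by positivity)]; exact half_lt_self hε⟩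
  obtain ⟨q, hq⟩ := radialMeasure.exists_pow_mul_even_polynomial_eLpNorm_sub_le hg ℓ
    (ENNReal.ofReal_pos.2 hδ).ne'
  obtain ⟨N, c, hc⟩ := exists_sum_zernikeR_eq hd ℓ q
  have hcont : Continuous fun r : ℝ => (r : 𝕜) ^ ℓ * q.eval ((r : 𝕜) ^ 2) := by fun_prop
  have hmeas : AEStronglyMeasurable (fun r => g r - (r : 𝕜) ^ ℓ * q.eval ((r : 𝕜) ^ 2))
      (radialMeasure n) := hg.1.sub hcont.aestronglyMeasurable
  refine ⟨N, c, ?_⟩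
  simp_rw [hc]
  rw [radialMeasure.integral_sq_norm_eq n hmeas]
  exact (pow_le_pow_left₀ ENNReal.toReal_nonneg
    (ENNReal.toReal_le_of_le_ofReal hδ.le hq) 2).trans_lt hδε

end ZernikeR

theorem zernikeR_span_dense_general (𝕜 : Type*) [RCLike 𝕜] (d ℓ : ℕ) (hd : 0 < d) :
    (∀ k k' : ℕ,
      ∫ r in (0:ℝ)..1, zernikeR d ℓ k r * zernikeR d ℓ k' r * r ^ (d - 1)
        = if k = k' then 1 else 0) ∧
    (∀ g : ℝ → 𝕜, MemLp g 2 (radialMeasure (d - 1)) →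
      ∀ ε > 0, ∃ (N : ℕ) (c : ℕ → 𝕜),
        ∫ r in (0:ℝ)..1,
            ‖g r - ∑ k ∈ Finset.range N, c k * (zernikeR d ℓ k r : 𝕜)‖ ^ 2 * r ^ (d - 1)
          < ε) :=
  ⟨integral_zernikeR_mul_zernikeR hd ℓ,
    fun _ hg _ hε => exists_integral_sub_sum_zernikeR_lt hd ℓ (d - 1) hg hε⟩

/-- For fixed `d ≥ 2` and `ℓ ≥ 0`, the linear span of the radial Zernike
polynomials `{R_{ℓ,k}}_{k∈ℕ}` is dense in the weighted space `L²([0,1], r^{d-1} dr)` of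
complex-valued square-integrable functions: every function `g` with
`∫₀¹ |g(r)|² r^{d-1} dr < ∞` can be approximated arbitrarily well in the weighted `L²`
norm by finite linear combinations.  Together with orthonormality, `{R_{ℓ,k}}_{k∈ℕ}` is
therefore an orthonormal basis of `L²([0,1], r^{d-1} dr)`. -/
theorem zernikeR_span_dense (d ℓ : ℕ) (hd : 2 ≤ d) :
    (∀ k k' : ℕ,
      ∫ r in (0:ℝ)..1, zernikeR d ℓ k r * zernikeR d ℓ k' r * r ^ (d - 1)
        = if k = k' then 1 else 0) ∧
    (∀ g : ℝ → ℂ, Measurable g →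
      (∫⁻ r in Set.Ioc (0:ℝ) 1, ENNReal.ofReal (‖g r‖ ^ 2 * r ^ (d - 1)) < ⊤) →
      ∀ ε > 0, ∃ (N : ℕ) (c : ℕ → ℂ),
        ∫ r in (0:ℝ)..1,
            ‖g r - ∑ k ∈ Finset.range N, c k * (zernikeR d ℓ k r : ℂ)‖ ^ 2 * r ^ (d - 1)
          < ε) :=
  (zernikeR_span_dense_general ℂ d ℓ (by omega)).imp_right fun density g hg hfin =>
    density g ((radialMeasure.memLp_two_iff (d - 1) hg.aestronglyMeasurable).2 hfin)
end

section
/- Let d ≥ 2 and ℓ, k ≥ 0 be integers, and let p : ℝ^d → ℂ be a harmonic homogeneous polynomial of degree ℓ (i.e. p(λx) = λ^ℓ p(x) for all λ ∈ ℝ and the sum of its second partial derivatives vanishes identically). Define the polynomial q(z) = Σ_{j=0}^{k} (−1)^j · binom(k,j) · (∏_{i=0}^{j−1} (ℓ+k+d/2+i)) / (∏_{i=0}^{j−1} (ℓ+d/2+i)) · z^j and set ψ(x) = q(‖x‖²) · p(x) for x ∈ ℝ^d. Then ψ is an eigenfunction of the d-dimensional Zernike operator with eigenvalue (ℓ+2k)(ℓ+2k+d):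 for every x ∈ ℝ^d, −Δψ(x) + (E²ψ)(x) + d·(Eψ)(x) = (ℓ+2k)(ℓ+2k+d)·ψ(x), where Δ is the Laplacian (sum of second partial derivatives), (Eψ)(x) = Σ_{i=1}^{d} x_i ∂ψ/∂x_i(x) is the Euler operator x·∇, and E² denotes applying E twice. -/
/-!
Everything happens in the polynomial ring. Write `n` for the number of variables, `r²` for the
second power sum and `E` for the Euler operator. By Euler's identity `r^{2j} P` is an eigenvector
of `E`, and iterating `Δ(r² F) = 2n F + 4 E F + r² ΔF` shows that `Δ` sends it to a multiple of
`r^{2(j-1)} P`. So the Zernike operator is bidiagonal on the family `r^{2j} P`, and it has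
`∑ j, c j r^{2j} P` as an eigenvector as soon as the `c j` satisfy a two-term recursion, the one
that characterises the coefficients of `₂F₁(-k, α + k; α; z)` with `α = ℓ + n/2`.
-/

open Finset

/-- Partial derivative of a function `ℝ^d → ℂ` in the `i`-th coordinate direction. -/
noncomputable def pderivCoord {d : ℕ} (i : Fin d) (ψ : (Fin d → ℝ) → ℂ) :
    (Fin d → ℝ) → ℂ :=
  fun x => deriv (fun t => ψ (Function.update x i t)) (x i)

/-- The Laplacian `Δψ = Σ_i ∂²ψ/∂x_i²`. -/
noncomputable def laplacian {d : ℕ} (ψ : (Fin d → ℝ) → ℂ) : (Fin d → ℝ) → ℂ :=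
  fun x => ∑ i, pderivCoord i (pderivCoord i ψ) x

/-- The Euler operator `(Eψ)(x) = Σ_i x_i ∂ψ/∂x_i(x) = (x·∇)ψ(x)`. -/
noncomputable def eulerOp {d : ℕ} (ψ : (Fin d → ℝ) → ℂ) : (Fin d → ℝ) → ℂ :=
  fun x => ∑ i, (x i : ℂ) * pderivCoord i ψ x

section Bidiagonal

variable {R M : Type*} [CommRing R] [AddCommGroup M] [Module R M]

lemma map_sum_range_succ_smul_of_bidiagonal (T : M →ₗ[R] M) {f : ℕ → M} {a b c : ℕ → R} {μ : R}
    {n : ℕ} (hzero : T (f 0) = a 0 • f 0)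
    (hsucc : ∀ j < n, T (f (j + 1)) = a (j + 1) • f (j + 1) - b j • f j)
    (hc : ∀ j < n, c (j + 1) * b j = c j * (a j - μ)) :
    T (∑ j ∈ range (n + 1), c j • f j)
      = μ • ∑ j ∈ range (n + 1), c j • f j + (c n * (a n - μ)) • f n := by
  induction n with
  | zero =>
    simp only [zero_add, sum_range_one, map_smul, hzero]
    module
  | succ n ih =>
    have ih := ih (fun j hj => hsucc j (hj.trans n.lt_succ_self))
      fun j hj => hc j (hj.trans n.lt_succ_self)
    rw [sum_range_succ, map_add, ih, map_smul, hsucc n n.lt_succ_self, ← hc n n.lt_succ_self]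
    module

lemma map_sum_range_succ_smul_eq_smul_of_bidiagonal (T : M →ₗ[R] M) {f : ℕ → M} {a b c : ℕ → R}
    {k : ℕ} (hzero : T (f 0) = a 0 • f 0)
    (hsucc : ∀ j < k, T (f (j + 1)) = a (j + 1) • f (j + 1) - b j • f j)
    (hc : ∀ j < k, c (j + 1) * b j = c j * (a j - a k)) :
    T (∑ j ∈ range (k + 1), c j • f j) = a k • ∑ j ∈ range (k + 1), c j • f j := by
  simp [map_sum_range_succ_smul_of_bidiagonal T hzero hsucc hc]

end Bidiagonal

lemma cast_choose_succ_mul (R : Type*) [CommRing R] (k j : ℕ) :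
    (k.choose (j + 1) : R) * (j + 1) = k.choose j * (k - j) := by
  rcases le_or_gt j k with hjk | hkj
  · rw [← Nat.cast_sub hjk]
    simpa using congrArg (Nat.cast (R := R)) (k.choose_succ_right_eq j)
  · simp [Nat.choose_eq_zero_of_lt hkj, Nat.choose_eq_zero_of_lt (hkj.trans j.lt_succ_self)]

namespace Zernike

open MvPolynomial

section RadialCoeff

variable {K : Type*} [Field K]

/-- The coefficient of `z ^ j` in the Jacobi polynomial `₂F₁(-k, α + k; α; z)`. For
`α = ℓ + d / 2` this is the radial factor `q` of the Zernike eigenfunctions. The quotient is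
meaningful only if `α` is none of `0, -1, …, 1 - j`. -/
def radialCoeff (α : K) (k j : ℕ) : K :=
  (-1) ^ j * k.choose j * ((∏ i ∈ range j, (α + k + i)) / ∏ i ∈ range j, (α + i))

lemma radialCoeff_succ_mul {α : K} {j : ℕ} (hα : α + j ≠ 0) (k : ℕ) :
    radialCoeff α k (j + 1) * ((j + 1) * (α + j))
      = radialCoeff α k j * ((j - k) * (α + k + j)) := by
  have hquot : (α + k + j) / (α + j) * (α + j) = α + k + j := div_mul_cancel₀ _ hα
  simp only [radialCoeff, prod_range_succ, mul_div_mul_comm]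
  set A := (∏ i ∈ range j, (α + k + i)) / ∏ i ∈ range j, (α + i)
  linear_combination (-(-1) ^ j * A * (k.choose (j + 1) * (j + 1))) * hquot
    - (-1) ^ j * A * (α + k + j) * cast_choose_succ_mul K k j

end RadialCoeff

section Euler

variable {σ R : Type*} [Fintype σ] [CommSemiring R]

/-- The Euler operator `∑ i, x_i ∂_i` on polynomials, the formal counterpart of `eulerOp`. -/
noncomputable def polyEuler : MvPolynomial σ R →ₗ[R] MvPolynomial σ R :=
  ∑ i, LinearMap.mulLeft R (X i) ∘ₗ (pderiv i).toLinearMap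

/-- The Laplacian `∑ i, ∂_i²` on polynomials, the formal counterpart of `laplacian`. -/
noncomputable def polyLaplacian : MvPolynomial σ R →ₗ[R] MvPolynomial σ R :=
  ∑ i, (pderiv i).toLinearMap ∘ₗ (pderiv i).toLinearMap

lemma polyEuler_apply (F : MvPolynomial σ R) : polyEuler F = ∑ i, X i * pderiv i F := by
  simp [polyEuler]

lemma polyLaplacian_apply (F : MvPolynomial σ R) :
    polyLaplacian F = ∑ i, pderiv i (pderiv i F) := by
  simp [polyLaplacian]

lemma polyEuler_of_isHomogeneous {F : MvPolynomial σ R} {m : ℕ} (hF : F.IsHomogeneous m) :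
    polyEuler F = m • F := by
  rw [polyEuler_apply, hF.sum_X_mul_pderiv]

lemma polyLaplacian_mul (F G : MvPolynomial σ R) :
    polyLaplacian (F * G)
      = polyLaplacian F * G + 2 * ∑ i, pderiv i F * pderiv i G + F * polyLaplacian G := by
  simp only [polyLaplacian_apply, sum_mul, mul_sum, ← sum_add_distrib]
  refine sum_congr rfl fun i _ => ?_
  simp only [pderiv_mul, map_add]
  ring

lemma isHomogeneous_psum (m : ℕ) : (psum σ R m).IsHomogeneous m :=
  IsHomogeneous.sum _ _ _ fun i _ => by simpa using (isHomogeneous_X R i).pow m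

lemma isHomogeneous_psum_two_pow_mul {P : MvPolynomial σ R} {ℓ : ℕ} (hP : P.IsHomogeneous ℓ)
    (j : ℕ) : (psum σ R 2 ^ j * P).IsHomogeneous (2 * j + ℓ) :=
  ((isHomogeneous_psum 2).pow j).mul hP

lemma pderiv_psum_two (i : σ) : pderiv i (psum σ R 2) = 2 * X i := by
  classical
  simp [psum, pderiv_X, Pi.single_apply]

lemma polyLaplacian_psum_two :
    polyLaplacian (psum σ R 2) = (2 * Fintype.card σ : ℕ) := by
  simp only [polyLaplacian_apply, pderiv_psum_two, two_mul, map_add, pderiv_X_self]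
  simp [← two_mul, mul_comm]

lemma polyLaplacian_psum_two_mul (F : MvPolynomial σ R) :
    polyLaplacian (psum σ R 2 * F)
      = (2 * Fintype.card σ) • F + 4 • polyEuler F + psum σ R 2 * polyLaplacian F := by
  simp only [polyLaplacian_mul, polyLaplacian_psum_two, pderiv_psum_two, polyEuler_apply,
    mul_assoc, ← mul_sum, nsmul_eq_mul]
  ring

lemma polyLaplacian_psum_two_pow_succ_mul {P : MvPolynomial σ R} {ℓ : ℕ} (hP : P.IsHomogeneous ℓ)
    (hharm : polyLaplacian P = 0) (j : ℕ) :
    polyLaplacian (psum σ R 2 ^ (j + 1) * P)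
      = (2 * (j + 1) * (2 * (j + ℓ) + Fintype.card σ)) • (psum σ R 2 ^ j * P) := by
  have hstep (j : ℕ) : polyLaplacian (psum σ R 2 ^ (j + 1) * P)
      = (2 * Fintype.card σ + 4 * (2 * j + ℓ)) • (psum σ R 2 ^ j * P)
        + psum σ R 2 * polyLaplacian (psum σ R 2 ^ j * P) := by
    rw [pow_succ', mul_assoc, polyLaplacian_psum_two_mul,
      polyEuler_of_isHomogeneous (isHomogeneous_psum_two_pow_mul hP j), smul_smul, ← add_smul]
  induction j with
  | zero =>
    simp only [hstep, pow_zero, one_mul, hharm, mul_zero, add_zero]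
    congr 1
    ring
  | succ j ih =>
    rw [hstep, ih, mul_smul_comm, ← mul_assoc, ← pow_succ', ← add_smul]
    congr 1
    ring

end Euler

section ZernikeOperator

variable {σ R : Type*} [Fintype σ] [CommRing R]

/-- The Zernike operator `-Δ + E² + n E` on polynomials in `n` variables. -/
noncomputable def polyZernike : MvPolynomial σ R →ₗ[R] MvPolynomial σ R :=
  -polyLaplacian + polyEuler ∘ₗ polyEuler + Fintype.card σ • polyEuler

lemma polyZernike_of_isHomogeneous {F : MvPolynomial σ R} {m : ℕ} (hF : F.IsHomogeneous m) :
    polyZernike F = ((m : R) * (m + Fintype.card σ)) • F - polyLaplacian F := by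
  simp only [polyZernike, LinearMap.add_apply, LinearMap.neg_apply, LinearMap.comp_apply,
    LinearMap.smul_apply, polyEuler_of_isHomogeneous hF, map_nsmul]
  module

lemma polyZernike_psum_two_pow_succ_mul {P : MvPolynomial σ R} {ℓ : ℕ} (hP : P.IsHomogeneous ℓ)
    (hharm : polyLaplacian P = 0) (j : ℕ) :
    polyZernike (psum σ R 2 ^ (j + 1) * P)
      = ((ℓ + 2 * (j + 1 : ℕ) : R) * (ℓ + 2 * (j + 1 : ℕ) + Fintype.card σ)) •
          (psum σ R 2 ^ (j + 1) * P)
        - (2 * (j + 1) * (2 * (j + ℓ) + Fintype.card σ) : R) • (psum σ R 2 ^ j * P) := by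
  rw [polyZernike_of_isHomogeneous (isHomogeneous_psum_two_pow_mul hP _),
    polyLaplacian_psum_two_pow_succ_mul hP hharm]
  push_cast
  module

end ZernikeOperator

section Eigenvector

variable {σ K : Type*} [Fintype σ] [Field K]

/-- The polynomial `q(r²) P`, where `q` has the coefficients `radialCoeff (ℓ + n / 2) k` and `n` is
the number of variables. -/
noncomputable def zernikePoly (ℓ k : ℕ) (P : MvPolynomial σ K) : MvPolynomial σ K :=
  ∑ j ∈ range (k + 1), radialCoeff ((ℓ : K) + Fintype.card σ / 2) k j • (psum σ K 2 ^ j * P)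

theorem polyZernike_zernikePoly [Nonempty σ] [CharZero K] {P : MvPolynomial σ K} {ℓ : ℕ}
    (hP : P.IsHomogeneous ℓ) (hharm : polyLaplacian P = 0) (k : ℕ) :
    polyZernike (zernikePoly ℓ k P)
      = ((ℓ + 2 * k : K) * (ℓ + 2 * k + Fintype.card σ)) • zernikePoly ℓ k P := by
  have hα (j : ℕ) : (ℓ : K) + Fintype.card σ / 2 + j ≠ 0 := by
    have : (2 * ℓ + Fintype.card σ + 2 * j : K) ≠ 0 := by
      exact_mod_cast (by have := Fintype.card_pos (α := σ); omega)
    contrapose! this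
    linear_combination 2 * this
  refine map_sum_range_succ_smul_eq_smul_of_bidiagonal polyZernike
    (a := fun j => (ℓ + 2 * j : K) * (ℓ + 2 * j + Fintype.card σ)) ?_
    (fun j _ => polyZernike_psum_two_pow_succ_mul hP hharm j) fun j _ => ?_
  · simp [polyZernike_of_isHomogeneous hP, hharm]
  · linear_combination 4 * radialCoeff_succ_mul (hα j) k

end Eigenvector

section Evaluation

variable {d : ℕ}

/-- The function `ℝ^d → ℂ` that a complex polynomial in `d` variables defines. -/
noncomputable def realEval (F : MvPolynomial (Fin d) ℂ) : (Fin d → ℝ) → ℂ :=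
  fun x => aeval (fun i => (x i : ℂ)) F

lemma hasDerivAt_realEval_update (i : Fin d) (F : MvPolynomial (Fin d) ℂ) (x : Fin d → ℝ) :
    HasDerivAt (fun t => realEval F (Function.update x i t)) (realEval (pderiv i F) x) (x i) := by
  unfold realEval
  induction F using MvPolynomial.induction_on with
  | C a => simpa using hasDerivAt_const (x i) a
  | add F G hF hG => simpa only [map_add] using hF.fun_add hG
  | mul_X F j hF =>
    have hX : HasDerivAt (fun t : ℝ => ((Function.update x i t j : ℝ) : ℂ))
        (aeval (fun i => (x i : ℂ)) (pderiv i (X j : MvPolynomial (Fin d) ℂ))) (x i) := by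
      rcases eq_or_ne j i with rfl | hji
      · simpa using (hasDerivAt_id (x j)).ofReal_comp
      · simpa [hji, pderiv_X_of_ne hji] using hasDerivAt_const (x i) (x j : ℂ)
    simpa only [pderiv_mul, map_add, map_mul, aeval_X, Function.update_eq_self] using hF.fun_mul hX

lemma pderivCoord_realEval (i : Fin d) (F : MvPolynomial (Fin d) ℂ) :
    pderivCoord i (realEval F) = realEval (pderiv i F) :=
  funext fun x => (hasDerivAt_realEval_update i F x).deriv

lemma eulerOp_realEval (F : MvPolynomial (Fin d) ℂ) :
    eulerOp (realEval F) = realEval (polyEuler F) := by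
  funext x
  simp [eulerOp, pderivCoord_realEval, realEval, polyEuler_apply]

lemma laplacian_realEval (F : MvPolynomial (Fin d) ℂ) :
    laplacian (realEval F) = realEval (polyLaplacian F) := by
  funext x
  simp only [laplacian, pderivCoord_realEval]
  simp [realEval, polyLaplacian_apply]

lemma realEval_polyZernike (F : MvPolynomial (Fin d) ℂ) (x : Fin d → ℝ) :
    realEval (polyZernike F) x
      = -laplacian (realEval F) x + eulerOp (eulerOp (realEval F)) x
        + d * eulerOp (realEval F) x := by
  simp only [eulerOp_realEval, laplacian_realEval]
  simp [realEval, polyZernike]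

lemma realEval_zernikePoly (ℓ k : ℕ) (P : MvPolynomial (Fin d) ℂ) (x : Fin d → ℝ) :
    realEval (zernikePoly ℓ k P) x
      = (∑ j ∈ range (k + 1), radialCoeff ((ℓ : ℂ) + d / 2) k j * (∑ i, (x i : ℂ) ^ 2) ^ j)
        * realEval P x := by
  simp [realEval, zernikePoly, psum, sum_mul, mul_assoc]

end Evaluation

end Zernike

open Zernike in
/-- In dimension one, where `P` is a multiple of `1` or `X`, the operator is Legendre's
`-(d/dx) (1 - x²) (d/dx)` and `ψ` is a multiple of the Legendre polynomial of degree `ℓ + 2k`. -/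
theorem zernike_operator_eigenfunction_general {d ℓ : ℕ} (k : ℕ) (hd : 1 ≤ d)
    {P : MvPolynomial (Fin d) ℂ} (hP : P.IsHomogeneous ℓ)
    (hharm : ∑ i, MvPolynomial.pderiv i (MvPolynomial.pderiv i P) = 0) {ψ : (Fin d → ℝ) → ℂ}
    (hψ : ∀ x, ψ x =
      (∑ j ∈ range (k + 1), radialCoeff ((ℓ : ℂ) + d / 2) k j * (∑ i, (x i : ℂ) ^ 2) ^ j)
        * realEval P x) (x : Fin d → ℝ) :
    -laplacian ψ x + eulerOp (eulerOp ψ) x + (d : ℂ) * eulerOp ψ x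
      = ((ℓ : ℂ) + 2 * k) * ((ℓ : ℂ) + 2 * k + d) * ψ x := by
  have : Nonempty (Fin d) := Fin.pos_iff_nonempty.mp hd
  obtain rfl : ψ = realEval (zernikePoly ℓ k P) :=
    funext fun x => (hψ x).trans (realEval_zernikePoly ℓ k P x).symm
  rw [← realEval_polyZernike, polyZernike_zernikePoly hP (by rwa [polyLaplacian_apply]) k]
  simp [realEval]

/-- If `p` is a harmonic homogeneous polynomial of degree `ℓ` on `ℝ^d`
and `q(z) = Σ_{j=0}^k (-1)^j C(k,j) (∏_{i<j}(ℓ+k+d/2+i))/(∏_{i<j}(ℓ+d/2+i)) z^j`,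
then `ψ(x) = q(‖x‖²) p(x)` is an eigenfunction of the `d`-dimensional Zernike operator
`-Δ + (x·∇)² + d(x·∇)` with eigenvalue `(ℓ+2k)(ℓ+2k+d)`. -/
theorem zernike_operator_eigenfunction (d ℓ k : ℕ) (hd : 2 ≤ d)
    (P : MvPolynomial (Fin d) ℂ)
    (hP_hom : P.IsHomogeneous ℓ)
    (hP_harm : (∑ i, MvPolynomial.pderiv i (MvPolynomial.pderiv i P)) = 0)
    (p : (Fin d → ℝ) → ℂ)
    (hp : ∀ x, p x = MvPolynomial.aeval (fun i => (x i : ℂ)) P)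
    (hp_hom : ∀ (lam : ℝ) (x : Fin d → ℝ), p (fun i => lam * x i) = (lam : ℂ) ^ ℓ * p x)
    (q : ℝ → ℝ)
    (hq : ∀ z : ℝ, q z = ∑ j ∈ Finset.range (k + 1),
        (-1 : ℝ) ^ j * (k.choose j : ℝ) *
          ((∏ i ∈ Finset.range j, ((ℓ : ℝ) + k + d / 2 + i)) /
            (∏ i ∈ Finset.range j, ((ℓ : ℝ) + d / 2 + i))) * z ^ j)
    (ψ : (Fin d → ℝ) → ℂ)
    (hψ : ∀ x, ψ x = (q (∑ i, x i ^ 2) : ℂ) * p x) :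
    ∀ x : Fin d → ℝ,
      -laplacian ψ x + eulerOp (eulerOp ψ) x + (d : ℂ) * eulerOp ψ x
        = ((ℓ : ℂ) + 2 * k) * ((ℓ : ℂ) + 2 * k + d) * ψ x := by
  exact zernike_operator_eigenfunction_general k (by omega) hP_hom hP_harm fun x => by
    simp [hψ, hq, hp, Zernike.realEval, Zernike.radialCoeff, add_right_comm]
end
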